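/- For any integers m ≥ 2 and n ≥ 1, the simplicial complex Hom_+(C_m, K_n) is homotopy equivalent to a wedge of 2^n copies of S^{nk−1} if m = 3k, and to S^{nk−1} if m = 3k ± 1. -/

import Mathlib

open Finset

noncomputable section
namespace Lovasz




structure Graph where
  V : Type
  fintypeV : Fintype V
  adj : V → V → Prop
  symm : ∀ {x y : V}, adj x y → adj y x

attribute [instance] Graph.fintypeV

def Graph.Loopless (G : Graph) : Prop := ∀ v : G.V, ¬ G.adj v v

def GraphHom (G H : Graph) : Type :=
  {f : G.V → H.V // ∀ x y : G.V, G.adj x y → H.adj (f x) (f y)}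

@[reducible] def completeGraph (n : ℕ) : Graph where
  V := Fin n
  fintypeV := inferInstance
  adj x y := x ≠ y
  symm h := h.symm

def chromaticNumber (G : Graph) : ℕ :=
  sInf {n : ℕ | Nonempty (GraphHom G (completeGraph n))}

@[reducible] def oddCycle (r : ℕ) : Graph where
  V := ZMod (2 * r + 1)
  fintypeV := inferInstance
  adj x y := x = y + 1 ∨ y = x + 1
  symm h := h.symm

/-- The cycle with `m` vertices (trivial graph for `m = 0`). -/
@[reducible] def cycleGraph : ℕ → Graph
  | 0 => ⟨Empty, inferInstance, fun _ _ => False, fun h => h⟩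
  | (n+1) =>
    { V := ZMod (n+1)
      fintypeV := inferInstance
      adj := fun x y => x = y + 1 ∨ y = x + 1
      symm := fun h => h.symm }

/-- The geometric realization of the polyhedral complex `Hom(G,H)`: the space of functions
assigning to each vertex of `G` a probability distribution on `V(H)`, such that any choice of
vertices from the supports yields a graph homomorphism. -/
abbrev HomComplex (G H : Graph) : Type :=
  {f : G.V → H.V → ℝ //
    (∀ v w, 0 ≤ f v w) ∧ (∀ v, ∑ w, f v w = 1) ∧
    ∀ x y : G.V, G.adj x y → ∀ a b : H.V, f x a ≠ 0 → f y b ≠ 0 → H.adj a b}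

/-- The geometric realization of the simplicial complex `Hom₊(G,H)`. -/
abbrev HomPlus (G H : Graph) : Type :=
  {f : G.V → H.V → ℝ //
    (∀ v w, 0 ≤ f v w) ∧ (∑ v, ∑ w, f v w = 1) ∧
    ∀ x y : G.V, G.adj x y → ∀ a b : H.V, f x a ≠ 0 → f y b ≠ 0 → H.adj a b}

/-- The geometric realization of the independence complex `Ind(G)`. -/
abbrev IndSpace (G : Graph) : Type :=
  {f : G.V → ℝ //
    (∀ v, 0 ≤ f v) ∧ (∑ v, f v = 1) ∧
    ∀ x y : G.V, G.adj x y → f x = 0 ∨ f y = 0}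

/-- The map `Hom(G',H) → Hom(G,H)` induced by a graph homomorphism `ι : G → G'`. -/
def precompHom {G G' : Graph} (ι : GraphHom G G') (H : Graph) :
    C(HomComplex G' H, HomComplex G H) where
  toFun f := ⟨fun v w => f.1 (ι.1 v) w,
    fun v w => f.2.1 (ι.1 v) w,
    fun v => f.2.2.1 (ι.1 v),
    fun x y h a b ha hb => f.2.2.2 (ι.1 x) (ι.1 y) (ι.2 x y h) a b ha hb⟩
  continuous_toFun := by
    apply Continuous.subtype_mk
    apply continuous_pi; intro v
    apply continuous_pi; intro w
    exact (continuous_apply w).comp ((continuous_apply (ι.1 v)).comp continuous_subtype_val)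

/-- The map `Hom₊(G',H) → Hom₊(G,H)` induced by an *invertible* graph homomorphism is only used
for involutions, where precomposition preserves the normalization; for bijective `ι` the total
sum is preserved. -/
def precompHomPlus {G : Graph} (ι : GraphHom G G) (hbij : Function.Bijective ι.1) (H : Graph) :
    C(HomPlus G H, HomPlus G H) where
  toFun f := ⟨fun v w => f.1 (ι.1 v) w,
    fun v w => f.2.1 (ι.1 v) w,
    by
      show ∑ v, ∑ w, f.1 (ι.1 v) w = 1
      have h2 : ∑ v, ∑ w, f.1 (ι.1 v) w = ∑ v, ∑ w, f.1 v w :=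
        Fintype.sum_bijective ι.1 hbij _ _ (fun v => rfl)
      rw [h2]; exact f.2.2.1,
    fun x y h a b ha hb => f.2.2.2 (ι.1 x) (ι.1 y) (ι.2 x y h) a b ha hb⟩
  continuous_toFun := by
    apply Continuous.subtype_mk
    apply continuous_pi; intro v
    apply continuous_pi; intro w
    exact (continuous_apply w).comp ((continuous_apply (ι.1 v)).comp continuous_subtype_val)

lemma precompHom_invol {G : Graph} (γ : GraphHom G G) (hγ : ∀ v, γ.1 (γ.1 v) = v) (H : Graph) :
    ∀ f, precompHom γ H (precompHom γ H f) = f := by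
  intro f
  apply Subtype.ext
  funext v w
  show f.1 (γ.1 (γ.1 v)) w = f.1 v w
  rw [hγ]

lemma precompHomPlus_invol {G : Graph} (γ : GraphHom G G) (hbij : Function.Bijective γ.1)
    (hγ : ∀ v, γ.1 (γ.1 v) = v) (H : Graph) :
    ∀ f, precompHomPlus γ hbij H (precompHomPlus γ hbij H f) = f := by
  intro f
  apply Subtype.ext
  funext v w
  show f.1 (γ.1 (γ.1 v)) w = f.1 v w
  rw [hγ]

/-- The reflection `x ↦ -x` of the odd cycle. -/
def cycleReflect (r : ℕ) : GraphHom (oddCycle r) (oddCycle r) :=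
  ⟨fun x => (-x : ZMod (2 * r + 1)), by
    intro x y h
    change (x : ZMod (2 * r + 1)) = y + 1 ∨ y = x + 1 at h
    change (-x : ZMod (2 * r + 1)) = -y + 1 ∨ (-y : ZMod (2 * r + 1)) = -x + 1
    rcases h with h | h
    · right; rw [h]; ring
    · left; rw [h]; ring⟩

lemma cycleReflect_invol (r : ℕ) : ∀ v, (cycleReflect r).1 ((cycleReflect r).1 v) = v :=
  fun v => neg_neg (v : ZMod (2 * r + 1))

lemma cycleReflect_bijective (r : ℕ) : Function.Bijective (cycleReflect r).1 :=
  Function.Involutive.bijective (fun v => neg_neg (v : ZMod (2 * r + 1)))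

open scoped Topology in
/-- `k`-connectedness (`k ≥ -1`): nonempty, path-connected (when `k ≥ 0`), and all homotopy
groups `π_i` vanish for `1 ≤ i ≤ k`. -/
def KConnected (k : ℤ) (X : Type) [TopologicalSpace X] : Prop :=
  Nonempty X ∧ ((0:ℤ) ≤ k → PathConnectedSpace X) ∧
    ∀ i : ℕ, 1 ≤ i → (i : ℤ) ≤ k → ∀ x : X, Subsingleton (HomotopyGroup (Fin i) X x)



/-- The `d`-dimensional sphere, as the unit sphere in `ℝ^{d+1}`. -/
abbrev nSphere (d : ℕ) : Type :=
  (Metric.sphere (0 : EuclideanSpace ℝ (Fin (d+1))) 1 : Set (EuclideanSpace ℝ (Fin (d+1))))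

/-- The antipodal involution of the `d`-sphere. -/
def nSphereNeg (d : ℕ) : C(nSphere d, nSphere d) where
  toFun x := ⟨-x.1, by
    have hx := x.2
    rw [Metric.mem_sphere, dist_zero_right] at hx ⊢
    rwa [norm_neg]⟩
  continuous_toFun := by
    apply Continuous.subtype_mk
    exact continuous_subtype_val.neg

lemma nSphereNeg_invol (d : ℕ) : ∀ x, nSphereNeg d (nSphereNeg d x) = x := by
  intro x
  apply Subtype.ext
  show -(-x.1) = x.1
  exact neg_neg _

/-- A base point on the `d`-sphere. -/
def northPole (d : ℕ) : nSphere d :=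
  ⟨EuclideanSpace.single (0 : Fin (d+1)) (1 : ℝ), by
    rw [Metric.mem_sphere, dist_zero_right, EuclideanSpace.norm_single]
    norm_num⟩

/-- The setoid gluing `m` spheres of dimension `d` at their base points. -/
def wedgeSetoid (m d : ℕ) : Setoid (Fin m × nSphere d) where
  r a b := a = b ∨ (a.2 = northPole d ∧ b.2 = northPole d)
  iseqv := by
    constructor
    · exact fun a => Or.inl rfl
    · rintro a b (rfl | ⟨h1, h2⟩)
      · exact Or.inl rfl
      · exact Or.inr ⟨h2, h1⟩
    · rintro a b c (rfl | ⟨h1, h2⟩) (rfl | ⟨h3, h4⟩)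
      · exact Or.inl rfl
      · exact Or.inr ⟨h3, h4⟩
      · exact Or.inr ⟨h1, h2⟩
      · exact Or.inr ⟨h1, h4⟩

/-- The wedge (one-point union) of `m` copies of the `d`-sphere. -/
abbrev WedgeOfSpheres (m d : ℕ) : Type := Quotient (wedgeSetoid m d)

/-- The setoid for the topological join `X * Y` on `X × Y × [0,1]`:
at time `0` collapse `Y`, at time `1` collapse `X`. -/
def joinSetoid (X Y : Type) [TopologicalSpace X] [TopologicalSpace Y] :
    Setoid (X × Y × unitInterval) where
  r a b := a = b ∨ (a.2.2 = 0 ∧ b.2.2 = 0 ∧ a.1 = b.1) ∨ (a.2.2 = 1 ∧ b.2.2 = 1 ∧ a.2.1 = b.2.1)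
  iseqv := by
    constructor
    · exact fun a => Or.inl rfl
    · rintro a b (rfl | ⟨h1, h2, h3⟩ | ⟨h1, h2, h3⟩)
      · exact Or.inl rfl
      · exact Or.inr (Or.inl ⟨h2, h1, h3.symm⟩)
      · exact Or.inr (Or.inr ⟨h2, h1, h3.symm⟩)
    · rintro a b c (rfl | ⟨h1, h2, h3⟩ | ⟨h1, h2, h3⟩) (rfl | ⟨h4, h5, h6⟩ | ⟨h4, h5, h6⟩)
      · exact Or.inl rfl
      · exact Or.inr (Or.inl ⟨h4, h5, h6⟩)
      · exact Or.inr (Or.inr ⟨h4, h5, h6⟩)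
      · exact Or.inr (Or.inl ⟨h1, h2, h3⟩)
      · exact Or.inr (Or.inl ⟨h1, h5, h3.trans h6⟩)
      · exact absurd (congrArg Subtype.val (h4.symm.trans h2))
          (by simp)
      · exact Or.inr (Or.inr ⟨h1, h2, h3⟩)
      · exact absurd (congrArg Subtype.val (h2.symm.trans h4))
          (by simp)
      · exact Or.inr (Or.inr ⟨h1, h5, h3.trans h6⟩)

/-- The topological join `X * Y`. -/
abbrev TopJoin (X Y : Type) [TopologicalSpace X] [TopologicalSpace Y] : Type :=
  Quotient (joinSetoid X Y)

/-- A continuous map is a homotopy equivalence. -/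
def IsHomotopyEquiv {X Y : Type} [TopologicalSpace X] [TopologicalSpace Y] (f : C(X, Y)) : Prop :=
  ∃ g : C(Y, X), (g.comp f).Homotopic (ContinuousMap.id X) ∧
    (f.comp g).Homotopic (ContinuousMap.id Y)

/-- A `ℤ/2`-equivariant homotopy equivalence between spaces with involutions, where all maps and
homotopies are equivariant. -/
def IsZ2HomotopyEquiv {X Y : Type} [TopologicalSpace X] [TopologicalSpace Y]
    (τ : C(X, X)) (ρ : C(Y, Y)) : Prop :=
  ∃ (f : C(X, Y)) (g : C(Y, X)),
    (∀ x, f (τ x) = ρ (f x)) ∧ (∀ y, g (ρ y) = τ (g y)) ∧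
    (∃ H : (g.comp f).Homotopy (ContinuousMap.id X), ∀ x t, H (t, τ x) = τ (H (t, x))) ∧
    (∃ K : (f.comp g).Homotopy (ContinuousMap.id Y), ∀ y t, K (t, ρ y) = ρ (K (t, y)))

/-!
An assignment of nonnegative weights to the vertices of `G` whose support is independent is a point
of the *independence cone* of `G`. Scaling identifies `Hom₊(G, K_n)` with the punctured product of
`n` copies of this cone. The punctured product of two cones deforms onto the join of their links,
so everything follows from a description of the independence cone of `C_m` up to homotopy
equivalences that respect the punctured cones. Subdividing an edge by three further vertices
multiplies the cone by `ℝ`, which suspends its link; this reduces `C_m` to `C_1`, `C_2` and `C_3`,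
with cones a point, `ℝ` and a tripod. The first two give a Euclidean space, hence a sphere. The
third gives the join of a sphere with `n` three-point sets. Choose a base point, the stem, in each
three-point set. The points of the join with some coordinate on its stem form a contractible closed
subset, whose complement consists of `2 ^ n` open cells. Collapsing it gives the one-point
compactification of the disjoint union of these cells, which is a wedge of `2 ^ n` spheres.
-/

open scoped NNReal unitInterval ContinuousMap

section ZeroReflecting

variable {X Y Z : Type*} [TopologicalSpace X] [TopologicalSpace Y] [TopologicalSpace Z]
  [Zero X] [Zero Y] [Zero Z]

/-- The maps that restrict to the complements of `0`; the value at `0` itself is unconstrained. -/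
def ReflectsZero (f : C(X, Y)) : Prop := ∀ x, f x = 0 → x = 0

lemma ReflectsZero.comp {g : C(Y, Z)} {f : C(X, Y)} (hg : ReflectsZero g) (hf : ReflectsZero f) :
    ReflectsZero (g.comp f) :=
  fun x hx => hf x (hg _ hx)

lemma ReflectsZero.homotopicWith_comp_left {g : C(Y, Z)} (hg : ReflectsZero g) {f₀ f₁ : C(X, Y)}
    (hf : f₀.HomotopicWith f₁ ReflectsZero) :
    (g.comp f₀).HomotopicWith (g.comp f₁) ReflectsZero := by
  obtain ⟨F⟩ := hf
  exact ⟨{ toContinuousMap := g.comp F.toContinuousMap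
           map_zero_left := fun x => congrArg g (F.map_zero_left x)
           map_one_left := fun x => congrArg g (F.map_one_left x)
           prop' := fun t => hg.comp (F.prop' t) }⟩

lemma ReflectsZero.homotopicWith_comp_right {f : C(X, Y)} (hf : ReflectsZero f) {g₀ g₁ : C(Y, Z)}
    (hg : g₀.HomotopicWith g₁ ReflectsZero) :
    (g₀.comp f).HomotopicWith (g₁.comp f) ReflectsZero := by
  obtain ⟨G⟩ := hg
  exact ⟨{ toContinuousMap := G.toContinuousMap.comp (.prodMap (.id I) f)
           map_zero_left := fun x => G.map_zero_left (f x)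
           map_one_left := fun x => G.map_one_left (f x)
           prop' := fun t => ReflectsZero.comp (G.prop' t) hf }⟩

variable (X Y) in
/-- Homotopy equivalence of pointed spaces by maps and homotopies that restrict to the complements
of the base points. Unlike homotopy equivalence of these complements it is stable under products,
where it stands for the join. -/
def PuncturedEquiv : Prop :=
  ∃ (f : C(X, Y)) (g : C(Y, X)), ReflectsZero f ∧ ReflectsZero g ∧
    (g.comp f).HomotopicWith (.id X) ReflectsZero ∧ (f.comp g).HomotopicWith (.id Y) ReflectsZero

namespace PuncturedEquiv

lemma of_homeomorph (e : X ≃ₜ Y) (he : e 0 = 0) : PuncturedEquiv X Y :=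
  ⟨e, e.symm,
    fun _ hx => e.injective (hx.trans he.symm),
    fun _ hy => e.symm.injective (hy.trans (e.symm_apply_eq.2 he.symm).symm),
    by rw [e.symm_comp_toContinuousMap]; exact .refl _ fun _ hx => hx,
    by rw [e.toContinuousMap_comp_symm]; exact .refl _ fun _ hy => hy⟩

variable (X) in
lemma refl : PuncturedEquiv X X := of_homeomorph (.refl X) rfl

lemma symm (h : PuncturedEquiv X Y) : PuncturedEquiv Y X := by
  obtain ⟨f, g, hf, hg, hgf, hfg⟩ := h
  exact ⟨g, f, hg, hf, hfg, hgf⟩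

lemma trans (h : PuncturedEquiv X Y) (h' : PuncturedEquiv Y Z) : PuncturedEquiv X Z := by
  obtain ⟨f, g, hf, hg, hgf, hfg⟩ := h
  obtain ⟨f', g', hf', hg', hgf', hfg'⟩ := h'
  exact ⟨f'.comp f, g.comp g', hf'.comp hf, hg.comp hg',
    (hg.homotopicWith_comp_left (hf.homotopicWith_comp_right hgf')).trans hgf,
    (hf'.homotopicWith_comp_left (hg'.homotopicWith_comp_right hfg)).trans hfg'⟩

lemma pi {ι : Type*} {X Y : ι → Type*} [∀ i, TopologicalSpace (X i)] [∀ i, TopologicalSpace (Y i)]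
    [∀ i, Zero (X i)] [∀ i, Zero (Y i)] (h : ∀ i, PuncturedEquiv (X i) (Y i)) :
    PuncturedEquiv (∀ i, X i) (∀ i, Y i) := by
  choose f g hf hg hgf hfg using h
  have F i := (hgf i).some
  have G i := (hfg i).some
  exact ⟨.piMap f, .piMap g, fun x hx => funext fun i => hf i _ (congrFun hx i),
    fun y hy => funext fun i => hg i _ (congrFun hy i),
    ⟨{ toFun := fun p i => F i (p.1, p.2 i)
       map_zero_left := fun x => funext fun i => (F i).map_zero_left (x i)
       map_one_left := fun x => funext fun i => (F i).map_one_left (x i)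
       prop' := fun t x hx => funext fun i => (F i).prop' t _ (congrFun hx i) }⟩,
    ⟨{ toFun := fun p i => G i (p.1, p.2 i)
       map_zero_left := fun x => funext fun i => (G i).map_zero_left (x i)
       map_one_left := fun x => funext fun i => (G i).map_one_left (x i)
       prop' := fun t x hx => funext fun i => (G i).prop' t _ (congrFun hx i) }⟩⟩

lemma prod {X' Y' : Type*} [TopologicalSpace X'] [TopologicalSpace Y'] [Zero X'] [Zero Y']
    (h : PuncturedEquiv X Y) (h' : PuncturedEquiv X' Y') :
    PuncturedEquiv (X × X') (Y × Y') := by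
  obtain ⟨f, g, hf, hg, ⟨F⟩, ⟨G⟩⟩ := h
  obtain ⟨f', g', hf', hg', ⟨F'⟩, ⟨G'⟩⟩ := h'
  exact ⟨.prodMap f f', .prodMap g g',
    fun x hx => Prod.ext (hf _ (congrArg Prod.fst hx)) (hf' _ (congrArg Prod.snd hx)),
    fun y hy => Prod.ext (hg _ (congrArg Prod.fst hy)) (hg' _ (congrArg Prod.snd hy)),
    ⟨{ toFun := fun p => (F (p.1, p.2.1), F' (p.1, p.2.2))
       map_zero_left := fun x => Prod.ext (F.map_zero_left x.1) (F'.map_zero_left x.2)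
       map_one_left := fun x => Prod.ext (F.map_one_left x.1) (F'.map_one_left x.2)
       prop' := fun t x hx => Prod.ext (F.prop' t _ (congrArg Prod.fst hx))
        (F'.prop' t _ (congrArg Prod.snd hx)) }⟩,
    ⟨{ toFun := fun p => (G (p.1, p.2.1), G' (p.1, p.2.2))
       map_zero_left := fun x => Prod.ext (G.map_zero_left x.1) (G'.map_zero_left x.2)
       map_one_left := fun x => Prod.ext (G.map_one_left x.1) (G'.map_one_left x.2)
       prop' := fun t x hx => Prod.ext (G.prop' t _ (congrArg Prod.fst hx))
        (G'.prop' t _ (congrArg Prod.snd hx)) }⟩⟩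

lemma homotopyEquiv (h : PuncturedEquiv X Y) :
    Nonempty ({x : X // x ≠ 0} ≃ₕ {y : Y // y ≠ 0}) := by
  obtain ⟨f, g, hf, hg, ⟨F⟩, ⟨G⟩⟩ := h
  exact ⟨{
    toFun := ⟨fun x => ⟨f x, mt (hf x) x.2⟩, by fun_prop⟩
    invFun := ⟨fun y => ⟨g y, mt (hg y) y.2⟩, by fun_prop⟩
    left_inv := ⟨{
      toFun := fun p => ⟨F (p.1, p.2), mt (F.prop' p.1 p.2) p.2.2⟩
      map_zero_left := fun x => Subtype.ext (F.map_zero_left x)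
      map_one_left := fun x => Subtype.ext (F.map_one_left x) }⟩
    right_inv := ⟨{
      toFun := fun p => ⟨G (p.1, p.2), mt (G.prop' p.1 p.2) p.2.2⟩
      map_zero_left := fun y => Subtype.ext (G.map_zero_left y)
      map_one_left := fun y => Subtype.ext (G.map_one_left y) }⟩ }⟩

end PuncturedEquiv

end ZeroReflecting

open unitInterval in
lemma nonempty_punctured_homotopyEquiv_link {X : Type*} [TopologicalSpace X] [Zero X]
    [MulAction ℝ≥0 X] [ContinuousSMul ℝ≥0 X] (N : C(X, ℝ≥0)) (hsmul : ∀ c x, N (c • x) = c * N x)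
    (hzero : ∀ x, N x = 0 ↔ x = 0) : Nonempty ({x : X // x ≠ 0} ≃ₕ {x : X // N x = 1}) := by
  have hN (x : {x : X // x ≠ 0}) : N x ≠ 0 := mt (hzero x).1 x.2
  have hinv : Continuous fun x : {x : X // x ≠ 0} => (N x)⁻¹ := Continuous.inv₀ (by fun_prop) hN
  have hne (p : I × {x : X // x ≠ 0}) :
      (toNNReal (σ p.1) * (N p.2)⁻¹ + toNNReal p.1) • (p.2 : X) ≠ 0 := by
    rw [Ne, ← hzero, hsmul, mul_eq_zero, not_or, add_eq_zero]
    refine ⟨fun ⟨hσ, ht⟩ => ?_, hN p.2⟩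
    have hsum := toNNReal_add_toNNReal_symm p.1
    rw [ht, (mul_eq_zero.1 hσ).resolve_right (inv_ne_zero (hN p.2)), add_zero] at hsum
    exact zero_ne_one hsum
  exact ⟨{
    toFun := ⟨fun x => ⟨(N x)⁻¹ • (x : X), by rw [hsmul, inv_mul_cancel₀ (hN x)]⟩, by fun_prop⟩
    invFun := ⟨fun x => ⟨x, fun h => by simpa [x.2] using (hzero x).2 h⟩, by fun_prop⟩
    left_inv := ⟨{
      toFun := fun p => ⟨_, hne p⟩
      continuous_toFun := by
        have := hinv.comp (continuous_snd (X := I))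
        exact .subtype_mk (by fun_prop) _
      map_zero_left := fun x => Subtype.ext (by simp)
      map_one_left := fun x => Subtype.ext (by simp) }⟩
    right_inv := by
      convert ContinuousMap.Homotopic.refl _
      ext x
      simp [x.2] }⟩

section IndependenceCone

variable {V W : Type*} {r : V → V → Prop} {s : W → W → Prop}

/-- The cone over the independence complex of the relation `r`: the nonnegative weights on the
vertices whose support contains no related pair. -/
def indCone (r : V → V → Prop) : SubMulAction ℝ≥0 (V → ℝ≥0) where
  carrier := {f | ∀ v w, r v w → f v = 0 ∨ f w = 0}
  smul_mem' c f hf v w h := (hf v w h).imp (by simp +contextual) (by simp +contextual)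

namespace indCone

lemma mem_iff {f : V → ℝ≥0} : f ∈ indCone r ↔ ∀ v w, r v w → f v = 0 ∨ f w = 0 := Iff.rfl

instance : Nonempty (indCone r) := ⟨⟨0, fun _ _ _ => .inl rfl⟩⟩

lemma coe_eq_zero {f : indCone r} : (f : V → ℝ≥0) = 0 ↔ f = 0 :=
  (Subtype.ext_iff (a1 := f) (a2 := 0)).symm

protected lemma zero_smul (f : indCone r) : (0 : ℝ≥0) • f = 0 :=
  Subtype.ext (zero_smul ℝ≥0 (f : V → ℝ≥0))

@[fun_prop]
lemma continuous_coe_apply {X : Type*} [TopologicalSpace X] {f : X → indCone r}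
    (hf : Continuous f) (v : V) : Continuous fun x => (f x : V → ℝ≥0) v :=
  (continuous_apply v).comp (continuous_subtype_val.comp hf)

lemma mem_of_support_subset {f g : V → ℝ≥0} (hg : g ∈ indCone r) (h : ∀ v, g v = 0 → f v = 0) :
    f ∈ indCone r :=
  fun v w hvw => (hg v w hvw).imp (h v) (h w)

lemma isClosed (r : V → V → Prop) : IsClosed (indCone r : Set (V → ℝ≥0)) := by
  have : (indCone r : Set (V → ℝ≥0)) = ⋂ (v) (w) (_ : r v w), {f | f v = 0} ∪ {f | f w = 0} := by
    ext f
    simp [mem_iff]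
  rw [this]
  exact isClosed_iInter fun v => isClosed_iInter fun w => isClosed_iInter fun _ =>
    (isClosed_eq (by fun_prop) (by fun_prop)).union (isClosed_eq (by fun_prop) (by fun_prop))

open unitInterval in
lemma homotopicWith_of_add_mem {X : Type*} [TopologicalSpace X] [Zero X] {f₀ f₁ : C(X, indCone r)}
    (hadd : ∀ x, (f₀ x + f₁ x : V → ℝ≥0) ∈ indCone r) (h₀ : ReflectsZero f₀)
    (h₁ : ReflectsZero f₁) : f₀.HomotopicWith f₁ ReflectsZero :=
  ⟨{toFun := fun p => ⟨toNNReal (σ p.1) • (f₀ p.2 : V → ℝ≥0) + toNNReal p.1 • (f₁ p.2 : V → ℝ≥0),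
      mem_of_support_subset (hadd p.2) fun v hv => by
        have := add_eq_zero.1 hv
        simp [this]⟩
    map_zero_left := fun x => Subtype.ext (by simp)
    map_one_left := fun x => Subtype.ext (by simp)
    prop' := fun t x hx => by
      obtain ⟨hf₀, hf₁⟩ := add_eq_zero.1 (coe_eq_zero.2 hx)
      rcases smul_eq_zero.1 hf₁ with ht | hf₁
      · have hσ := toNNReal_add_toNNReal_symm t
        rw [ht, zero_add] at hσ
        rw [hσ, one_smul] at hf₀
        exact h₀ x (coe_eq_zero.1 hf₀)
      · exact h₁ x (coe_eq_zero.1 hf₁) }⟩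

lemma mem_iff_symmGen {f : V → ℝ≥0} :
    f ∈ indCone r ↔ ∀ v w, Relation.SymmGen r v w → f v = 0 ∨ f w = 0 :=
  ⟨fun hf v w => Or.rec (hf v w) fun hwv => (hf w v hwv).symm,
    fun hf v w hvw => hf v w (.inl hvw)⟩

lemma puncturedEquiv_of_equiv (e : V ≃ W)
    (h : ∀ v w, Relation.SymmGen r v w ↔ Relation.SymmGen s (e v) (e w)) :
    PuncturedEquiv (indCone r) (indCone s) := by
  let E := (Homeomorph.piCongrLeft (Y := fun _ => ℝ≥0) e.symm).symm
  refine .of_homeomorph (E.subtype fun f => ?_) ?_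
  · simp only [mem_iff_symmGen, h, e.forall_congr_left, e.apply_symm_apply]
    rfl
  · rfl

end indCone

end IndependenceCone

section SumRelation

variable {V W : Type*}

/-- The independence cone of a disjoint union is the product of the independence cones. -/
def indCone.liftRelHomeomorph (r : V → V → Prop) (s : W → W → Prop) :
    indCone (Sum.LiftRel r s) ≃ₜ indCone r × indCone s where
  toFun f := (⟨fun v => f.1 (.inl v), fun v w h => f.2 _ _ (.inl h)⟩,
    ⟨fun v => f.1 (.inr v), fun v w h => f.2 _ _ (.inr h)⟩)
  invFun f := ⟨Sum.elim f.1 f.2, fun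
    | _, _, .inl h => f.1.2 _ _ h
    | _, _, .inr h => f.2.2 _ _ h⟩
  left_inv f := Subtype.ext (Sum.elim_comp_inl_inr f.1)
  continuous_toFun := by fun_prop
  continuous_invFun := by
    refine .subtype_mk (continuous_pi ?_) _
    rintro (v | v) <;> simp only [Sum.elim_inl, Sum.elim_inr] <;> fun_prop

/-- The independence cone of an edge is a line. -/
def indCone.edgeHomeomorph : indCone (completeGraph 2).adj ≃ₜ ℝ where
  toFun f := f.1 0 - f.1 1
  invFun t := ⟨![t.toNNReal, (-t).toNNReal], by
    rw [mem_iff, Fin.forall_fin_two]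
    rcases le_total t 0 with ht | ht <;> simp [Fin.forall_fin_two, ht]⟩
  left_inv f := by
    ext i
    rcases f.2 0 1 zero_ne_one with h | h <;> fin_cases i <;> simp [h]
  right_inv t := by simp [Real.coe_toNNReal']
  continuous_toFun := by fun_prop
  continuous_invFun := by
    refine .subtype_mk (continuous_pi ?_) _
    exact Fin.forall_fin_two.2
      ⟨continuous_real_toNNReal, continuous_real_toNNReal.comp continuous_neg⟩

end SumRelation

section EdgeSubdivision

variable {V : Type*} {r : V → V → Prop} {p q : V}

/-- The graph obtained by joining `p` to `q`, which may coincide, by an edge. -/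
def addEdge (r : V → V → Prop) (p q : V) (v w : V) : Prop := r v w ∨ v = p ∧ w = q

/-- The graph obtained by joining `p` to `q`, which may coincide, by a path with three new inner
vertices. -/
def addPath (r : V → V → Prop) (p q : V) : V ⊕ Fin 3 → V ⊕ Fin 3 → Prop
  | .inl v, .inl w => r v w
  | .inl v, .inr i => v = p ∧ i = 0
  | .inr i, .inl w => i = 2 ∧ w = q
  | .inr i, .inr j => (i : ℕ) + 1 = j

/-- The disjoint union of `addEdge r p q` with a single edge. -/
abbrev addEdgeSum (r : V → V → Prop) (p q : V) : V ⊕ Fin 2 → V ⊕ Fin 2 → Prop :=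
  Sum.LiftRel (addEdge r p q) (completeGraph 2).adj

lemma mem_indCone_addPath {f : V ⊕ Fin 3 → ℝ≥0} :
    f ∈ indCone (addPath r p q) ↔ (f ∘ .inl ∈ indCone r) ∧ (f (.inl p) = 0 ∨ f (.inr 0) = 0) ∧
      (f (.inr 0) = 0 ∨ f (.inr 1) = 0) ∧ (f (.inr 1) = 0 ∨ f (.inr 2) = 0) ∧
      (f (.inr 2) = 0 ∨ f (.inl q) = 0) := by
  refine ⟨fun hf => ⟨fun v w => hf (.inl v) (.inl w), hf (.inl p) (.inr 0) ⟨rfl, rfl⟩,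
    hf (.inr 0) (.inr 1) rfl, hf (.inr 1) (.inr 2) rfl, hf (.inr 2) (.inl q) ⟨rfl, rfl⟩⟩, ?_⟩
  rintro ⟨hr, hp, h₀₁, h₁₂, hq⟩ (v | i) (w | j) hadj
  · exact hr v w hadj
  · obtain ⟨rfl, rfl⟩ := hadj
    exact hp
  · obtain ⟨rfl, rfl⟩ := hadj
    exact hq
  · change (i : ℕ) + 1 = j at hadj
    obtain ⟨rfl, rfl⟩ | ⟨rfl, rfl⟩ : (i = 0 ∧ j = 1) ∨ (i = 1 ∧ j = 2) := by omega
    exacts [h₀₁, h₁₂]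

lemma mem_indCone_addEdgeSum {f : V ⊕ Fin 2 → ℝ≥0} :
    f ∈ indCone (addEdgeSum r p q) ↔ (f ∘ .inl ∈ indCone r) ∧ (f (.inl p) = 0 ∨ f (.inl q) = 0) ∧
      (f (.inr 0) = 0 ∨ f (.inr 1) = 0) := by
  refine ⟨fun hf => ⟨fun v w hr => hf (.inl v) (.inl w) (.inl (.inl hr)),
    hf (.inl p) (.inl q) (.inl (.inr ⟨rfl, rfl⟩)), hf (.inr 0) (.inr 1) (.inr zero_ne_one)⟩, ?_⟩
  rintro ⟨hr, hpq, h₀₁⟩ _ _ (⟨hadj | ⟨rfl, rfl⟩⟩ | @⟨i, j, hij⟩)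
  · exact hr _ _ hadj
  · exact hpq
  · obtain ⟨rfl, rfl⟩ | ⟨rfl, rfl⟩ : (i = 0 ∧ j = 1) ∨ (i = 1 ∧ j = 0) := by omega
    exacts [h₀₁, h₀₁.symm]

section Maps

variable [DecidableEq V]

/-- Truncated subtraction of `t` from the weights at `p` and `q`. -/
def trim (p q : V) (t : ℝ≥0) (g : V → ℝ≥0) (v : V) : ℝ≥0 :=
  if v = p ∨ v = q then g v - t else g v

lemma trim_eq_zero {t : ℝ≥0} {g : V → ℝ≥0} {v : V} (h : g v = 0) : trim p q t g v = 0 := by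
  simp [trim, h]

lemma trim_zero (g : V → ℝ≥0) : trim p q 0 g = g := by
  ext v
  simp [trim]

lemma trim_left (p q : V) (t : ℝ≥0) (g : V → ℝ≥0) : trim p q t g p = g p - t := by simp [trim]

lemma trim_right (p q : V) (t : ℝ≥0) (g : V → ℝ≥0) : trim p q t g q = g q - t := by simp [trim]

lemma trim_mem {t : ℝ≥0} {g : V → ℝ≥0} (h : g ∈ indCone r) : trim p q t g ∈ indCone r :=
  indCone.mem_of_support_subset h fun _ => trim_eq_zero

@[fun_prop]
lemma continuous_trim {X : Type*} [TopologicalSpace X] {t : X → ℝ≥0} {g : X → V → ℝ≥0}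
    (ht : Continuous t) (hg : Continuous g) (v : V) :
    Continuous fun x => trim p q (t x) (g x) v := by
  unfold trim
  split_ifs <;> fun_prop

/-- The weights on `addEdgeSum r p q` obtained from weights on `addPath r p q` by moving the common
part of the weights at `p` and `q` to the middle of the path, and uniting the ends of the path. -/
def foldPath (p q : V) (f : V ⊕ Fin 3 → ℝ≥0) : V ⊕ Fin 2 → ℝ≥0
  | .inl v => trim p q (min (f (.inl p)) (f (.inl q))) (f ∘ .inl) v
  | .inr 0 => f (.inr 0) + f (.inr 2)
  | .inr 1 => f (.inr 1) + min (f (.inl p)) (f (.inl q))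

/-- Splits the weight `s` at the first new vertex between the ends of the path: all of it
goes to the end away from `p` where the weight of `p` exceeds `s`, likewise for `q`, and half of it
goes to either end where `p` and `q` have weight `0`. -/
def unfoldPath (p q : V) (f : V ⊕ Fin 2 → ℝ≥0) : V ⊕ Fin 3 → ℝ≥0
  | .inl v => trim p q (f (.inr 0)) (f ∘ .inl) v
  | .inr 0 => (f (.inr 0) - f (.inl p) + min (f (.inl q)) (f (.inr 0))) / 2
  | .inr 1 => f (.inr 1)
  | .inr 2 => (f (.inr 0) - f (.inl q) + min (f (.inl p)) (f (.inr 0))) / 2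

lemma foldPath_mem {f : V ⊕ Fin 3 → ℝ≥0} (hf : f ∈ indCone (addPath r p q)) :
    foldPath p q f ∈ indCone (addEdgeSum r p q) := by
  rw [mem_indCone_addPath] at hf
  obtain ⟨hf, hp, h₀₁, h₁₂, hq⟩ := hf
  refine mem_indCone_addEdgeSum.2 ⟨trim_mem hf, ?_, ?_⟩
  · simp only [foldPath, trim_left, trim_right, Function.comp_apply]
    rcases le_total (f (.inl p)) (f (.inl q)) with h | h <;> simp [h]
  · simp only [foldPath, add_eq_zero, min_eq_zero]
    grind

lemma unfoldPath_mem {f : V ⊕ Fin 2 → ℝ≥0} (hf : f ∈ indCone (addEdgeSum r p q)) :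
    unfoldPath p q f ∈ indCone (addPath r p q) := by
  rw [mem_indCone_addEdgeSum] at hf
  obtain ⟨hf, hpq, h₀₁⟩ := hf
  refine mem_indCone_addPath.2 ⟨trim_mem hf, ?_, ?_, ?_, ?_⟩ <;>
  simp only [unfoldPath, trim_left, trim_right, tsub_eq_zero_iff_le, Function.comp_apply,
    div_eq_zero_iff, add_eq_zero, OfNat.ofNat_ne_zero, or_false, min_eq_zero] <;>
  grind [zero_le]

/-- The continuous map of independence cones underlying `foldPath`. -/
def foldPathMap (r : V → V → Prop) (p q : V) :
    C(indCone (addPath r p q), indCone (addEdgeSum r p q)) where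
  toFun f := ⟨foldPath p q f, foldPath_mem f.2⟩
  continuous_toFun := by
    refine .subtype_mk (continuous_pi ?_) _
    rintro (v | i)
    · simp only [foldPath, Function.comp_def]
      fun_prop
    · fin_cases i <;> simp only [foldPath] <;> fun_prop

/-- The continuous map of independence cones underlying `unfoldPath`. -/
def unfoldPathMap (r : V → V → Prop) (p q : V) :
    C(indCone (addEdgeSum r p q), indCone (addPath r p q)) where
  toFun f := ⟨unfoldPath p q f, unfoldPath_mem f.2⟩
  continuous_toFun := by
    refine .subtype_mk (continuous_pi ?_) _
    rintro (v | i)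
    · simp only [unfoldPath, Function.comp_def]
      fun_prop
    · fin_cases i <;> simp only [unfoldPath] <;> fun_prop

lemma reflectsZero_foldPathMap : ReflectsZero (foldPathMap r p q) := by
  intro f hf
  rw [← indCone.coe_eq_zero] at hf ⊢
  have hinl v := congrFun hf (.inl v)
  have h₀ := congrFun hf (.inr 0)
  have h₁ := congrFun hf (.inr 1)
  simp only [foldPathMap, ContinuousMap.coe_mk, foldPath, Pi.zero_apply, add_eq_zero] at hinl h₀ h₁
  rw [h₁.2, trim_zero] at hinl
  exact funext (Sum.forall.2
    ⟨hinl, Fin.forall_fin_succ.2 ⟨h₀.1, Fin.forall_fin_two.2 ⟨h₁.1, h₀.2⟩⟩⟩)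

lemma reflectsZero_unfoldPathMap : ReflectsZero (unfoldPathMap r p q) := by
  intro f hf
  rw [← indCone.coe_eq_zero] at hf ⊢
  have hinl v := congrFun hf (.inl v)
  have h₀ := congrFun hf (.inr 0)
  have h₁ := congrFun hf (.inr 1)
  have h₂ := congrFun hf (.inr 2)
  simp only [unfoldPathMap, ContinuousMap.coe_mk, unfoldPath, Pi.zero_apply, add_eq_zero,
    div_eq_zero_iff, OfNat.ofNat_ne_zero, or_false, tsub_eq_zero_iff_le] at hinl h₀ h₁ h₂
  have hs : (f : V ⊕ Fin 2 → ℝ≥0) (.inr 0) = 0 := by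
    have := (mem_indCone_addEdgeSum.1 f.2).2.1
    grind [nonpos_iff_eq_zero]
  rw [hs, trim_zero] at hinl
  exact funext (Sum.forall.2 ⟨hinl, Fin.forall_fin_two.2 ⟨hs, h₁⟩⟩)

lemma homotopicWith_foldPathMap_comp_unfoldPathMap :
    ((foldPathMap r p q).comp (unfoldPathMap r p q)).HomotopicWith (.id _) ReflectsZero := by
  refine indCone.homotopicWith_of_add_mem
    (fun f => indCone.mem_of_support_subset f.2 fun v hv => add_eq_zero.2 ⟨?_, hv⟩)
    (reflectsZero_foldPathMap.comp reflectsZero_unfoldPathMap) fun _ hf => hf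
  change foldPath p q (unfoldPath p q f) v = 0
  rcases v with v | i
  · exact trim_eq_zero (trim_eq_zero hv)
  · fin_cases i
    · simp_all [foldPath, unfoldPath]
    · rcases (mem_indCone_addEdgeSum.1 f.2).2.1 with h | h <;>
      simp_all [foldPath, unfoldPath, trim_left, trim_right]

/-- An intermediate stage between the identity and `unfoldPath p q ∘ foldPath p q`, which cannot be
joined directly by segments inside the independence cone. -/
def slidePath (p q : V) (f : V ⊕ Fin 3 → ℝ≥0) : V ⊕ Fin 3 → ℝ≥0
  | .inl v => unfoldPath p q (foldPath p q f) (.inl v)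
  | .inr 0 => f (.inr 0)
  | .inr 1 => foldPath p q f (.inr 1)
  | .inr 2 => f (.inr 2)

lemma slidePath_add_mem {f : V ⊕ Fin 3 → ℝ≥0} (hf : f ∈ indCone (addPath r p q)) :
    slidePath p q f + f ∈ indCone (addPath r p q) := by
  rw [mem_indCone_addPath] at hf
  obtain ⟨hf, hp, h₀₁, h₁₂, hq⟩ := hf
  have hinl v (hv : f (.inl v) = 0) : unfoldPath p q (foldPath p q f) (.inl v) = 0 :=
    trim_eq_zero (trim_eq_zero hv)
  refine mem_indCone_addPath.2 ⟨indCone.mem_of_support_subset hf fun v hv =>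
    add_eq_zero.2 ⟨hinl v hv, hv⟩, ?_, ?_, ?_, ?_⟩ <;>
  simp only [Pi.add_apply, slidePath, foldPath, add_eq_zero, min_eq_zero] <;>
  grind

lemma unfoldPath_foldPath_add_slidePath_mem {f : V ⊕ Fin 3 → ℝ≥0}
    (hf : f ∈ indCone (addPath r p q)) :
    unfoldPath p q (foldPath p q f) + slidePath p q f ∈ indCone (addPath r p q) := by
  have hu := unfoldPath_mem (foldPath_mem hf)
  rw [mem_indCone_addPath] at hf hu
  obtain ⟨-, hp, h₀₁, h₁₂, hq⟩ := hf
  obtain ⟨hu, hup, hu₀₁, hu₁₂, huq⟩ := hu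
  have hinl v (hv : f (.inl v) = 0) : unfoldPath p q (foldPath p q f) (.inl v) = 0 :=
    trim_eq_zero (trim_eq_zero hv)
  have hmid : unfoldPath p q (foldPath p q f) (.inr 1) = foldPath p q f (.inr 1) := rfl
  have hfold : foldPath p q f (.inr 1) = 0 ↔ _ := add_eq_zero.trans (and_congr_right' min_eq_zero)
  refine mem_indCone_addPath.2 ⟨indCone.mem_of_support_subset hu fun v hv =>
    add_eq_zero.2 ⟨hv, hv⟩, ?_, ?_, ?_, ?_⟩ <;>
  simp only [Pi.add_apply, slidePath, add_eq_zero] <;>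
  grind

/-- The continuous map of independence cones underlying `slidePath`. -/
def slidePathMap (r : V → V → Prop) (p q : V) :
    C(indCone (addPath r p q), indCone (addPath r p q)) where
  toFun f := ⟨slidePath p q f, indCone.mem_of_support_subset (slidePath_add_mem f.2) fun _ hv =>
    (add_eq_zero.1 hv).1⟩
  continuous_toFun := by
    have hfold := (foldPathMap r p q).continuous
    have hunfold := ((unfoldPathMap r p q).comp (foldPathMap r p q)).continuous
    refine .subtype_mk (continuous_pi ?_) _
    rintro (v | i)
    · exact indCone.continuous_coe_apply hunfold (Sum.inl v)
    · fin_cases i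
      · exact indCone.continuous_coe_apply continuous_id (Sum.inr 0)
      · exact indCone.continuous_coe_apply hfold (Sum.inr 1)
      · exact indCone.continuous_coe_apply continuous_id (Sum.inr 2)

lemma reflectsZero_slidePathMap : ReflectsZero (slidePathMap r p q) := by
  intro f hf
  rw [← indCone.coe_eq_zero] at hf
  have hinl v : unfoldPath p q (foldPath p q f) (.inl v) = 0 := congrFun hf (.inl v)
  have h₀ : f.1 (.inr 0) = 0 := congrFun hf (.inr 0)
  have h₁ : foldPath p q f.1 (.inr 1) = 0 := congrFun hf (.inr 1)
  have h₂ : f.1 (.inr 2) = 0 := congrFun hf (.inr 2)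
  have hs : foldPath p q f.1 (.inr 0) = 0 := add_eq_zero.2 ⟨h₀, h₂⟩
  refine reflectsZero_foldPathMap f (indCone.coe_eq_zero.1 (funext (Sum.forall.2
    ⟨fun v => ?_, Fin.forall_fin_two.2 ⟨hs, h₁⟩⟩)))
  have := hinl v
  rwa [unfoldPath, hs, trim_zero] at this

lemma homotopicWith_unfoldPathMap_comp_foldPathMap :
    ((unfoldPathMap r p q).comp (foldPathMap r p q)).HomotopicWith (.id _) ReflectsZero :=
  (indCone.homotopicWith_of_add_mem (f₁ := slidePathMap r p q)
    (fun f => unfoldPath_foldPath_add_slidePath_mem f.2)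
    (reflectsZero_unfoldPathMap.comp reflectsZero_foldPathMap) reflectsZero_slidePathMap).trans
  (indCone.homotopicWith_of_add_mem (fun f => slidePath_add_mem f.2)
    reflectsZero_slidePathMap fun _ hf => hf)

end Maps

variable (r p q) in
lemma puncturedEquiv_addPath :
    PuncturedEquiv (indCone (addPath r p q)) (indCone (addEdge r p q) × ℝ) := by
  classical
  exact PuncturedEquiv.trans ⟨foldPathMap r p q, unfoldPathMap r p q, reflectsZero_foldPathMap,
      reflectsZero_unfoldPathMap, homotopicWith_unfoldPathMap_comp_foldPathMap,
      homotopicWith_foldPathMap_comp_unfoldPathMap⟩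
    (.of_homeomorph ((indCone.liftRelHomeomorph _ _).trans
      ((Homeomorph.refl _).prodCongr indCone.edgeHomeomorph))
      (Prod.ext rfl (sub_self _)))

end EdgeSubdivision

section Cycle

/-- The path `0 → 1 → ⋯ → n - 1`. -/
def pathRel (n : ℕ) (v w : Fin n) : Prop := (v : ℕ) + 1 = w

lemma symmGen_cycleGraph_adj (l : ℕ) (v w : Fin (l + 1)) :
    Relation.SymmGen (cycleGraph (l + 1)).adj v w ↔
      Relation.SymmGen (addEdge (pathRel (l + 1)) (Fin.last l) 0) v w := by
  have hsucc (v w : Fin (l + 1)) : w = v + 1 ↔ addEdge (pathRel (l + 1)) (Fin.last l) 0 v w := by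
    rw [Fin.ext_iff, Fin.val_add_one, addEdge, pathRel]
    split_ifs with h <;> grind
  simp only [Relation.SymmGen, ← hsucc]
  change ((v = w + 1 ∨ w = v + 1) ∨ (w = v + 1 ∨ v = w + 1)) ↔ _
  tauto

lemma addPath_pathRel (l : ℕ) (v w : Fin (l + 1) ⊕ Fin 3) :
    addPath (pathRel (l + 1)) (Fin.last l) 0 v w ↔
      addEdge (pathRel (l + 1 + 3)) (Fin.last (l + 3)) 0 (finSumFinEquiv v)
        (finSumFinEquiv w) := by
  rcases v with v | i <;> rcases w with w | j <;>
  simp only [addPath, addEdge, pathRel, finSumFinEquiv_apply_left, finSumFinEquiv_apply_right,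
    Fin.ext_iff, Fin.val_castAdd, Fin.val_natAdd, Fin.val_last, Fin.val_zero, Fin.val_two] <;>
  omega

lemma puncturedEquiv_cycleGraph_add_three (l : ℕ) :
    PuncturedEquiv (indCone (cycleGraph (l + 3 + 1)).adj)
      (indCone (cycleGraph (l + 1)).adj × ℝ) := by
  have hcycle (l : ℕ) : PuncturedEquiv (indCone (cycleGraph (l + 1)).adj)
      (indCone (addEdge (pathRel (l + 1)) (Fin.last l) 0)) :=
    indCone.puncturedEquiv_of_equiv (.refl (Fin (l + 1))) (symmGen_cycleGraph_adj l)
  have hpath : PuncturedEquiv (indCone (addPath (pathRel (l + 1)) (Fin.last l) 0))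
      (indCone (addEdge (pathRel (l + 1 + 3)) (Fin.last (l + 3)) 0)) :=
    indCone.puncturedEquiv_of_equiv finSumFinEquiv fun v w =>
      or_congr (addPath_pathRel l v w) (addPath_pathRel l w v)
  exact (hcycle (l + 3)).trans <| hpath.symm.trans <| (puncturedEquiv_addPath _ _ _).trans <|
    (hcycle l).symm.prod (.refl ℝ)

lemma puncturedEquiv_cycleGraph_add_three_mul (l j : ℕ) :
    PuncturedEquiv (indCone (cycleGraph (l + 3 * j + 1)).adj)
      (indCone (cycleGraph (l + 1)).adj × (Fin j → ℝ)) := by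
  induction j with
  | zero =>
    exact .of_homeomorph (Homeomorph.prodUnique _ _).symm (Prod.ext rfl (Subsingleton.elim _ _))
  | succ j ih =>
    have hdim : Module.finrank ℝ ((Fin j → ℝ) × ℝ) = Module.finrank ℝ (Fin (j + 1) → ℝ) := by simp
    let e := ContinuousLinearEquiv.ofFinrankEq hdim
    exact (puncturedEquiv_cycleGraph_add_three (l + 3 * j)).trans <| (ih.prod (.refl ℝ)).trans <|
      .of_homeomorph ((Homeomorph.prodAssoc _ _ _).trans (.prodCongr (.refl _) e.toHomeomorph))
        (Prod.ext rfl (map_zero e))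

lemma puncturedEquiv_cycleGraph_three_mul_add_one (j : ℕ) :
    PuncturedEquiv (indCone (cycleGraph (3 * j + 1)).adj) (Fin j → ℝ) := by
  rw [← zero_add (3 * j)]
  have hzero (f : indCone (cycleGraph 1).adj) : f = 0 :=
    indCone.coe_eq_zero.1 <| funext <| Fin.forall_fin_one.2 <|
      or_self_iff.1 <| f.2 (0 : Fin 1) (0 : Fin 1) (.inl rfl)
  have : Unique (indCone (cycleGraph 1).adj) := ⟨⟨0⟩, hzero⟩
  exact (puncturedEquiv_cycleGraph_add_three_mul 0 j).trans <|
    .of_homeomorph (Homeomorph.uniqueProd _ _) rfl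

lemma puncturedEquiv_cycleGraph_three_mul_add_two (j : ℕ) :
    PuncturedEquiv (indCone (cycleGraph (3 * j + 2)).adj) (ℝ × (Fin j → ℝ)) := by
  rw [← Nat.add_right_comm _ 1 1, add_comm _ 1]
  have hadj : ∀ v w : Fin 2, v = w + 1 ∨ w = v + 1 ↔ v ≠ w := by decide
  have hedge : PuncturedEquiv (indCone (cycleGraph 2).adj) (indCone (completeGraph 2).adj) :=
    indCone.puncturedEquiv_of_equiv (.refl (Fin 2)) fun v w => or_congr (hadj v w) (hadj w v)
  exact (puncturedEquiv_cycleGraph_add_three_mul 1 j).trans <|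
    (hedge.trans (.of_homeomorph indCone.edgeHomeomorph (sub_self _))).prod (.refl _)

lemma puncturedEquiv_cycleGraph_three_mul_add_three (j : ℕ) :
    PuncturedEquiv (indCone (cycleGraph (3 * j + 3)).adj)
      (indCone (completeGraph 3).adj × (Fin j → ℝ)) := by
  rw [← add_assoc _ 2 1, add_comm _ 2]
  have hadj : ∀ v w : Fin 3, v = w + 1 ∨ w = v + 1 ↔ v ≠ w := by decide
  have htriangle : PuncturedEquiv (indCone (cycleGraph 3).adj) (indCone (completeGraph 3).adj) :=
    indCone.puncturedEquiv_of_equiv (.refl (Fin 3)) fun v w => or_congr (hadj v w) (hadj w v)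
  exact (puncturedEquiv_cycleGraph_add_three_mul 2 j).trans (htriangle.prod (.refl _))

end Cycle

section HomPlus

/-- The total mass, a gauge for the radial structure of an independence cone. -/
def indCone.mass {V : Type*} [Fintype V] {r : V → V → Prop} : C(indCone r, ℝ≥0) where
  toFun f := ∑ v, (f : V → ℝ≥0) v

namespace indCone

variable {V : Type*} [Fintype V] {r : V → V → Prop}

lemma coe_mass (f : indCone r) : (mass f : ℝ) = ∑ v, ((f : V → ℝ≥0) v : ℝ) :=
  NNReal.coe_sum _ _

lemma mass_smul (c : ℝ≥0) (f : indCone r) : mass (c • f) = c * mass f :=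
  (mul_sum _ _ _).symm

lemma mass_eq_zero {f : indCone r} : mass f = 0 ↔ f = 0 := by
  simp [mass, ← coe_eq_zero, funext_iff]

end indCone

variable (G : Graph) (n : ℕ)

/-- The points of `Hom₊(G, K_n)` are the families of `n` independent weights of total mass `1`
on `G`, one for each vertex of `K_n`. -/
def homPlusHomeomorph : HomPlus G (completeGraph n) ≃ₜ
    {x : Fin n → indCone G.adj // ∑ a, indCone.mass (x a) = 1} where
  toFun f := ⟨fun a => ⟨fun v => ⟨f.1 v a, f.2.1 v a⟩, fun v w hvw => by
      by_contra! h
      exact f.2.2.2 v w hvw a a (NNReal.coe_ne_zero.2 h.1) (NNReal.coe_ne_zero.2 h.2) rfl⟩, by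
    rw [← NNReal.coe_inj, NNReal.coe_sum]
    simp only [indCone.coe_mass]
    exact sum_comm.trans f.2.2.1⟩
  invFun x := ⟨fun v a => (x.1 a : G.V → ℝ≥0) v, fun _ _ => NNReal.coe_nonneg _, by
      have hx := congrArg NNReal.toReal x.2
      simp only [NNReal.coe_sum, indCone.coe_mass, NNReal.coe_one] at hx
      exact sum_comm.trans hx, by
    rintro v w hvw a b ha hb rfl
    exact ((x.1 a).2 v w hvw).elim (mt (congrArg _) ha) (mt (congrArg _) hb)⟩
  left_inv f := rfl
  right_inv x := rfl
  continuous_toFun := by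
    have happly (v a) : Continuous fun f : HomPlus G (completeGraph n) => f.1 v a :=
      (continuous_apply_apply v a).comp continuous_subtype_val
    refine .subtype_mk (continuous_pi fun a => ?_) _
    exact .subtype_mk (continuous_pi fun v => .subtype_mk (happly v a) _) _
  continuous_invFun := by
    refine .subtype_mk (continuous_pi fun v => continuous_pi fun a => ?_) _
    exact NNReal.continuous_coe.comp
      (indCone.continuous_coe_apply ((continuous_apply a).comp continuous_subtype_val) v)

lemma nonempty_homPlus_homotopyEquiv : Nonempty (HomPlus G (completeGraph n) ≃ₕ
    {x : Fin n → indCone G.adj // x ≠ 0}) := by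
  let N : C(Fin n → indCone G.adj, ℝ≥0) := ⟨fun x => ∑ a, indCone.mass (x a), by fun_prop⟩
  obtain ⟨e⟩ := nonempty_punctured_homotopyEquiv_link N
    (fun c x => by simp [N, indCone.mass_smul, mul_sum])
    (fun x => by simp [N, indCone.mass_eq_zero, funext_iff])
  exact ⟨(homPlusHomeomorph G n).toHomotopyEquiv.trans e.symm⟩

end HomPlus

section Sphere

lemma nonempty_punctured_homotopyEquiv_nSphere {E : Type*} [NormedAddCommGroup E]
    [NormedSpace ℝ E] [FiniteDimensional ℝ E] {d : ℕ} (hd : Module.finrank ℝ E = d + 1) :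
    Nonempty ({x : E // x ≠ 0} ≃ₕ nSphere d) := by
  let e : E ≃L[ℝ] EuclideanSpace ℝ (Fin (d + 1)) :=
    .ofFinrankEq (hd.trans finrank_euclideanSpace_fin.symm)
  obtain ⟨h⟩ := (PuncturedEquiv.of_homeomorph e.toHomeomorph (map_zero e)).homotopyEquiv
  obtain ⟨h'⟩ := nonempty_punctured_homotopyEquiv_link
    (⟨fun x => ‖x‖₊, by fun_prop⟩ : C(EuclideanSpace ℝ (Fin (d + 1)), ℝ≥0))
    (fun c x => by simp [NNReal.smul_def, nnnorm_smul]) (fun x => nnnorm_eq_zero)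
  let hsphere : {x : EuclideanSpace ℝ (Fin (d + 1)) // ‖x‖₊ = 1} ≃ₜ nSphere d :=
    .subtype (.refl _) fun x => by simp [← NNReal.coe_inj]
  exact ⟨h.trans (h'.trans hsphere.toHomotopyEquiv)⟩

lemma nonempty_homPlus_homotopyEquiv_nSphere {G : Graph} {W : Type*} [NormedAddCommGroup W]
    [NormedSpace ℝ W] [FiniteDimensional ℝ W] {n d : ℕ} (h : PuncturedEquiv (indCone G.adj) W)
    (hd : n * Module.finrank ℝ W = d + 1) :
    Nonempty (HomPlus G (completeGraph n) ≃ₕ nSphere d) := by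
  obtain ⟨e⟩ := nonempty_homPlus_homotopyEquiv G n
  obtain ⟨e'⟩ := (PuncturedEquiv.pi fun _ : Fin n => h).homotopyEquiv
  have hpi : Module.finrank ℝ (Fin n → W) = d + 1 := by
    rw [Module.finrank_pi_fintype, Fin.sum_const, smul_eq_mul, hd]
  obtain ⟨e''⟩ := nonempty_punctured_homotopyEquiv_nSphere hpi
  exact ⟨e.trans (e'.trans e'')⟩

end Sphere

section Collapse

variable {X : Type*} {A : Set X}

open Classical in
/-- The map collapsing a subset `A` of `X` to a point, the space `X / A` being modelled as the
one-point compactification of the complement of `A`. -/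
def collapse (A : Set X) (x : X) : OnePoint ↥Aᶜ := if h : x ∈ A then .infty else .some ⟨x, h⟩

lemma collapse_of_mem {x : X} (h : x ∈ A) : collapse A x = .infty := dif_pos h

lemma collapse_of_notMem {x : X} (h : x ∉ A) : collapse A x = .some ⟨x, h⟩ := dif_neg h

lemma collapse_eq_collapse_iff {x y : X} :
    collapse A x = collapse A y ↔ x = y ∨ x ∈ A ∧ y ∈ A := by
  by_cases hx : x ∈ A <;> by_cases hy : y ∈ A <;>
    simp only [collapse, hx, hy, dif_pos, dif_neg, not_false_eq_true, OnePoint.some_eq_iff,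
      OnePoint.coe_ne_infty, OnePoint.infty_ne_coe, Subtype.mk.injEq] <;> grind

lemma collapse_surjective (hne : A.Nonempty) : Function.Surjective (collapse A) :=
  OnePoint.forall.2 ⟨hne.imp fun _ => collapse_of_mem, fun x => ⟨x, collapse_of_notMem x.2⟩⟩

variable [TopologicalSpace X] [T2Space X]

lemma continuous_collapse (hA : IsClosed A) : Continuous (collapse A) := by
  refine continuous_def.2 fun U hU => ?_
  obtain ⟨hcompact, hopen⟩ := OnePoint.isOpen_def.1 hU
  by_cases hinfty : .infty ∈ U
  · have : collapse A ⁻¹' U = ((↑) '' ((.some : ↥Aᶜ → OnePoint ↥Aᶜ) ⁻¹' U)ᶜ)ᶜ := by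
      ext x
      by_cases hx : x ∈ A <;> simp [collapse, hx, hinfty]
    rw [this]
    exact ((hcompact hinfty).image continuous_subtype_val).isClosed.isOpen_compl
  · have : collapse A ⁻¹' U = (↑) '' ((.some : ↥Aᶜ → OnePoint ↥Aᶜ) ⁻¹' U) := by
      ext x
      by_cases hx : x ∈ A <;> simp [collapse, hx, hinfty]
    rw [this]
    exact hA.isOpen_compl.isOpenMap_subtype_val _ hopen

variable [CompactSpace X]

lemma isQuotientMap_prodMap_collapse (K : Type*) [TopologicalSpace K] [CompactSpace K] [T2Space K]
    (hA : IsClosed A) (hne : A.Nonempty) :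
    Topology.IsQuotientMap (Prod.map id (collapse A) : K × X → K × OnePoint ↥Aᶜ) := by
  have : LocallyCompactSpace ↥Aᶜ := hA.isOpen_compl.locallyCompactSpace
  have hcont : Continuous (Prod.map id (collapse A) : K × X → K × OnePoint ↥Aᶜ) :=
    continuous_id.prodMap (continuous_collapse hA)
  exact hcont.isClosedMap.isQuotientMap hcont <|
    Function.surjective_id.prodMap (collapse_surjective hne)

lemma isQuotientMap_collapse (hA : IsClosed A) (hne : A.Nonempty) :
    Topology.IsQuotientMap (collapse A) := by
  have : LocallyCompactSpace ↥Aᶜ := hA.isOpen_compl.locallyCompactSpace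
  exact (continuous_collapse hA).isClosedMap.isQuotientMap (continuous_collapse hA) <|
    collapse_surjective hne

lemma nonempty_homotopyEquiv_onePoint_compl (hA : IsClosed A) {H : C(I × X, X)} {x₀ : X}
    (hx₀ : x₀ ∈ A) (hzero : ∀ x, H (0, x) = x) (hmem : ∀ t, ∀ x ∈ A, H (t, x) ∈ A)
    (hone : ∀ x ∈ A, H (1, x) = x₀) : Nonempty (X ≃ₕ OnePoint ↥Aᶜ) := by
  let f : C(X, OnePoint ↥Aᶜ) := ⟨collapse A, continuous_collapse hA⟩
  have hfs : Function.Surjective f := collapse_surjective ⟨x₀, hx₀⟩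
  have hf : Topology.IsQuotientMap f := isQuotientMap_collapse hA ⟨x₀, hx₀⟩
  have hf' : Topology.IsQuotientMap (ContinuousMap.prodMap (.id I) f) :=
    isQuotientMap_prodMap_collapse I hA ⟨x₀, hx₀⟩
  have hH₁ : Function.FactorsThrough (H.comp (.prodMk (.const X 1) (.id X))) f := fun x y hxy => by
    rcases collapse_eq_collapse_iff.1 hxy with rfl | ⟨hx, hy⟩
    exacts [rfl, (hone x hx).trans (hone y hy).symm]
  have hfH : Function.FactorsThrough (f.comp H) (ContinuousMap.prodMap (.id I) f) := by
    rintro ⟨s, x⟩ ⟨t, y⟩ hxy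
    obtain ⟨rfl, hxy⟩ := Prod.ext_iff.1 hxy
    rcases collapse_eq_collapse_iff.1 hxy with rfl | ⟨hx, hy⟩
    exacts [rfl, collapse_eq_collapse_iff.2 (.inr ⟨hmem s x hx, hmem s y hy⟩)]
  let g := hf.lift _ hH₁
  let F := hf'.lift _ hfH
  have hg (x) : g (f x) = H (1, x) := DFunLike.congr_fun (hf.lift_comp _ hH₁) x
  have hF (t x) : F (t, f x) = f (H (t, x)) := DFunLike.congr_fun (hf'.lift_comp _ hfH) (t, x)
  exact ⟨{
    toFun := f
    invFun := g
    left_inv := .symm ⟨⟨H, hzero, fun x => (hg x).symm⟩⟩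
    right_inv := .symm ⟨⟨F, hfs.forall.2 fun x => by simp [hF, hzero],
      hfs.forall.2 fun x => by simp [hF, hg]⟩⟩ }⟩

end Collapse

section Wedge

/-- Stereographic projection from the north pole. -/
def sphereComplHomeomorph (d : ℕ) :
    ↥({northPole d}ᶜ : Set (nSphere d)) ≃ₜ EuclideanSpace ℝ (Fin d) :=
  have : Fact (Module.finrank ℝ (EuclideanSpace ℝ (Fin (d + 1))) = d + 1) := ⟨by simp⟩
  let s := stereographic' d (northPole d)
  (Homeomorph.setCongr (stereographic'_source (northPole d)).symm).trans <|
    s.toHomeomorphSourceTarget.trans <|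
      (Homeomorph.setCongr (stereographic'_target _)).trans (Homeomorph.Set.univ _)

lemma nonempty_wedgeOfSpheres_homeomorph_onePoint {N : ℕ} (hN : 0 < N) (d : ℕ) :
    Nonempty (WedgeOfSpheres N d ≃ₜ OnePoint (Fin N × EuclideanSpace ℝ (Fin d))) := by
  let A : Set (Fin N × nSphere d) := {p | p.2 = northPole d}
  have hA : IsClosed A := isClosed_eq continuous_snd continuous_const
  let f : C(Fin N × nSphere d, OnePoint ↥Aᶜ) := ⟨collapse A, continuous_collapse hA⟩
  have hf : Topology.IsQuotientMap f := isQuotientMap_collapse hA ⟨(⟨0, hN⟩, northPole d), rfl⟩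
  have hker : Setoid.ker f = wedgeSetoid N d :=
    Setoid.ext fun _ _ => collapse_eq_collapse_iff
  let e : ↥Aᶜ ≃ₜ Fin N × EuclideanSpace ℝ (Fin d) :=
    (Homeomorph.setCongr (by ext; simp [A])).trans <|
      (Homeomorph.Set.prod Set.univ {northPole d}ᶜ).trans <|
        (Homeomorph.Set.univ _).prodCongr (sphereComplHomeomorph d)
  change Nonempty (Quotient (wedgeSetoid N d) ≃ₜ _)
  rw [← hker]
  exact ⟨hf.homeomorph.trans e.onePointCongr⟩

end Wedge

section StarCone

variable {q : ℕ}

variable (q) in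
/-- The star with `q + 1` unbounded edges, as the cone over `q + 1` points. The edge of the
vertex `0` is the stem, those of the vertices `b.succ` are the legs. -/
abbrev StarCone : Type := indCone fun v w : Fin (q + 1) => v ≠ w

namespace StarCone

lemma eq_zero_of_ne {y : StarCone q} {v w : Fin (q + 1)} (hvw : w ≠ v) (hv : y.1 v ≠ 0) :
    y.1 w = 0 :=
  (y.2 w v hvw).resolve_right hv

/-- The position along the legs; it vanishes on the stem. -/
def legHeight : C(StarCone q, ℝ≥0) where
  toFun y := ∑ b : Fin q, y.1 b.succ

lemma legHeight_zero : legHeight (0 : StarCone q) = 0 :=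
  sum_eq_zero (s := univ) (f := fun _ : Fin q => (0 : ℝ≥0)) fun _ _ => rfl

lemma legHeight_smul (c : ℝ≥0) (y : StarCone q) : legHeight (c • y) = c * legHeight y :=
  (mul_sum univ (fun b : Fin q => y.1 b.succ) c).symm

lemma mass_eq_add_legHeight (y : StarCone q) : indCone.mass y = y.1 0 + legHeight y :=
  Fin.sum_univ_succ _

/-- The point at height `c` on the leg `b`. -/
def leg (b : Fin q) (c : ℝ≥0) : StarCone q :=
  ⟨fun v => if v = b.succ then c else 0, fun v w hvw => by grind⟩

lemma smul_leg (a : ℝ≥0) (b : Fin q) (c : ℝ≥0) : a • leg b c = leg b (a * c) :=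
  Subtype.ext <| funext fun v => mul_ite_zero (v = b.succ) a c

lemma legHeight_leg (b : Fin q) (c : ℝ≥0) : legHeight (leg b c) = c := by
  simp [legHeight, leg]

lemma eq_leg {y : StarCone q} {b : Fin q} (h : y.1 b.succ ≠ 0) : y = leg b (legHeight y) := by
  have hy : leg b (y.1 b.succ) = y := by
    ext v
    by_cases hv : v = b.succ
    · simp [leg, hv]
    · simp [leg, hv, eq_zero_of_ne hv h]
  rw [← hy, legHeight_leg]

lemma exists_ne_zero_of_legHeight_ne_zero {y : StarCone q} (h : legHeight y ≠ 0) :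
    ∃ b : Fin q, y.1 b.succ ≠ 0 := by
  simpa [legHeight] using h

/-- The leg containing a point off the stem. -/
def label (y : {y : StarCone q // legHeight y ≠ 0}) : Fin q :=
  (exists_ne_zero_of_legHeight_ne_zero y.2).choose

lemma leg_label (y : {y : StarCone q // legHeight y ≠ 0}) : leg (label y) (legHeight y.1) = y.1 :=
  (eq_leg (exists_ne_zero_of_legHeight_ne_zero y.2).choose_spec).symm

lemma label_eq_iff {y : {y : StarCone q // legHeight y ≠ 0}} {b : Fin q} :
    label y = b ↔ y.1.1 b.succ ≠ 0 := by
  have hlabel := (exists_ne_zero_of_legHeight_ne_zero y.2).choose_spec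
  refine ⟨fun h => h ▸ hlabel, fun hb => ?_⟩
  by_contra! h
  exact hlabel (eq_zero_of_ne ((Fin.succ_injective q).ne h) hb)

lemma continuous_label : Continuous (label (q := q)) := by
  refine continuous_discrete_rng.2 fun b => ?_
  have : label ⁻¹' {b} = {y : {y : StarCone q // legHeight y ≠ 0} | y.1.1 b.succ ≠ 0} :=
    Set.ext fun y => label_eq_iff
  rw [this]
  exact isOpen_ne_fun (by fun_prop) continuous_const

lemma stem_eq_zero_or_leg_eq_zero (ρ : ℝ≥0) (y : StarCone q) (b : Fin q) :
    y.1 0 + (ρ - legHeight y) = 0 ∨ y.1 b.succ - ρ = 0 := by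
  rcases y.2 0 b.succ (Fin.succ_ne_zero b).symm with hstem | hleg
  · rcases le_total ρ (legHeight y) with hρ | hρ
    · exact .inl (by rw [hstem, tsub_eq_zero_of_le hρ, add_zero])
    · have hle : y.1 b.succ ≤ legHeight y :=
        single_le_sum_of_canonicallyOrdered (f := fun b : Fin q => y.1 b.succ) (mem_univ b)
      exact .inr (tsub_eq_zero_of_le (hle.trans hρ))
  · exact .inr (by rw [hleg, zero_tsub])

/-- The flow that moves a point by `ρ` down its leg and then up the stem. -/
def push (ρ : ℝ≥0) (y : StarCone q) : StarCone q :=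
  ⟨Fin.cons (y.1 0 + (ρ - legHeight y)) fun b => y.1 b.succ - ρ, fun v w hvw => by
    cases v using Fin.cases <;> cases w using Fin.cases <;>
      simp only [Fin.cons_zero, Fin.cons_succ]
    case zero.zero => contradiction
    case zero.succ b => exact stem_eq_zero_or_leg_eq_zero ρ y b
    case succ.zero b => exact (stem_eq_zero_or_leg_eq_zero ρ y b).symm
    case succ.succ b b' =>
      exact (y.2 _ _ hvw).imp (fun h => by rw [h, zero_tsub]) (fun h => by rw [h, zero_tsub])⟩

lemma push_zero (y : StarCone q) : push 0 y = y := by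
  ext v
  cases v using Fin.cases <;> simp [push]

lemma legHeight_push (ρ : ℝ≥0) (y : StarCone q) : legHeight (push ρ y) = legHeight y - ρ := by
  by_cases h : legHeight y = 0
  · have hlegs : ∀ b : Fin q, y.1 b.succ = 0 := by simpa [legHeight] using h
    simp [legHeight, push, hlegs]
  · obtain ⟨b, hb⟩ := exists_ne_zero_of_legHeight_ne_zero h
    rw [eq_leg hb]
    simp [legHeight, push, leg, ite_sub]

lemma push_eq_zero {ρ : ℝ≥0} {y : StarCone q} (h : push ρ y = 0) : y.1 0 = 0 ∧ legHeight y = ρ := by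
  have hstem : y.1 0 + (ρ - legHeight y) = 0 := congrFun (indCone.coe_eq_zero.2 h) 0
  have hleg : legHeight y - ρ = 0 := by
    rw [← legHeight_push, h, legHeight_zero]
  obtain ⟨hstem, hle⟩ := add_eq_zero.1 hstem
  exact ⟨hstem, le_antisymm (tsub_eq_zero_iff_le.1 hleg) (tsub_eq_zero_iff_le.1 hle)⟩

lemma continuous_push {X : Type*} [TopologicalSpace X] {ρ : X → ℝ≥0} {y : X → StarCone q}
    (hρ : Continuous ρ) (hy : Continuous y) : Continuous fun x => push (ρ x) (y x) := by
  refine .subtype_mk (continuous_pi (Fin.cases ?_ fun b => ?_)) _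
  · simp only [Fin.cons_zero]
    fun_prop
  · simp only [Fin.cons_succ]
    fun_prop

end StarCone

end StarCone

section StarLink

variable {n q : ℕ} {W : Type*} [NormedAddCommGroup W]

variable (n q W) in
/-- The cone over the join of `n + 1` copies of `q + 1` points with the unit sphere of `W`. -/
abbrev StarProd : Type _ := (Fin (n + 1) → StarCone q) × W

open StarCone

/-- The radial gauge of `StarProd n q W`. -/
def gauge : C(StarProd n q W, ℝ≥0) where
  toFun x := ∑ i, indCone.mass (x.1 i) + ‖x.2‖₊

lemma gauge_eq_zero {x : StarProd n q W} : gauge x = 0 ↔ x = 0 := by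
  simp [gauge, indCone.mass_eq_zero, Prod.ext_iff, funext_iff]

variable (n q W) in
/-- The join of `n + 1` copies of `q + 1` points with the unit sphere of `W`. -/
abbrev StarLink : Type _ := {x : StarProd n q W // gauge x = 1}

lemma StarLink.coe_ne_zero (x : StarLink n q W) : x.1 ≠ 0 :=
  fun h => one_ne_zero (x.2.symm.trans (gauge_eq_zero.2 h))

variable (n q W) in
/-- The part of the link where some star coordinate lies on its stem. -/
def stemPart : Set (StarLink n q W) := {x | ∃ i, legHeight (x.1.1 i) = 0}

lemma isClosed_stemPart : IsClosed (stemPart n q W) := by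
  simp only [stemPart, Set.ofPred_exists]
  exact isClosed_iUnion_of_finite fun i => isClosed_eq (by fun_prop) continuous_const

/-- The time for which `contract` below is run, at speed `1` on `stemPart`. The only points of the
link that `contract` may carry to the origin have all leg heights equal to `1 / (n + 1)`, where the
speed vanishes. -/
def contractionTime (s : ℝ≥0) (x : StarProd n q W) : ℝ≥0 :=
  s * (1 - ∏ i, (n + 1) * legHeight (x.1 i))

lemma contractionTime_of_mem (s : ℝ≥0) {x : StarLink n q W} (hx : x ∈ stemPart n q W) :
    contractionTime s x.1 = s := by
  obtain ⟨i, hi⟩ := hx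
  rw [contractionTime, prod_eq_zero (mem_univ i) (by rw [hi, mul_zero]), tsub_zero, mul_one]

variable [NormedSpace ℝ W]

-- The default instance search runs out of time on actions of `ℝ≥0` through `ℝ≥0∞`.
instance : SMul ℝ≥0 (Fin (n + 1) → StarCone q) := Pi.instSMul
instance : MulAction ℝ≥0 (Fin (n + 1) → StarCone q) := Pi.mulAction _
instance : SMul ℝ≥0 (StarProd n q W) := Prod.instSMul
instance : MulAction ℝ≥0 (StarProd n q W) := Prod.mulAction
instance : ContinuousSMul ℝ≥0 (StarProd n q W) := Prod.continuousSMul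

lemma gauge_smul (c : ℝ≥0) (x : StarProd n q W) : gauge (c • x) = c * gauge x := by
  change ∑ i, indCone.mass (c • x.1 i) + ‖c • x.2‖₊ = c * (∑ i, indCone.mass (x.1 i) + ‖x.2‖₊)
  simp only [indCone.mass_smul, NNReal.smul_def, nnnorm_smul, NNReal.nnnorm_eq, mul_add, mul_sum]

/-- The radial projection to the link. -/
def normalize (x : StarProd n q W) (hx : x ≠ 0) : StarLink n q W :=
  ⟨(gauge x)⁻¹ • x, by rw [gauge_smul, inv_mul_cancel₀ (mt gauge_eq_zero.1 hx)]⟩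

lemma normalize_smul {c : ℝ≥0} {x : StarProd n q W} (hcx : c • x ≠ 0) (hx : x ≠ 0) :
    normalize (c • x) hcx = normalize x hx := by
  have hc : c ≠ 0 := left_ne_zero_of_mul (gauge_smul c x ▸ mt gauge_eq_zero.1 hcx)
  simp only [normalize, gauge_smul, smul_smul, mul_inv_rev, inv_mul_cancel_right₀ hc]

lemma normalize_coe (x : StarLink n q W) : normalize x.1 x.coe_ne_zero = x :=
  Subtype.ext (by simp only [normalize, x.2, inv_one, one_smul])

lemma continuous_normalize {X : Type*} [TopologicalSpace X] {f : X → StarProd n q W}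
    (hf : Continuous f) (hne : ∀ x, f x ≠ 0) : Continuous fun x => normalize (f x) (hne x) :=
  .subtype_mk (((gauge.continuous.comp hf).inv₀ fun x => mt gauge_eq_zero.1 (hne x)).smul hf) _

lemma nonempty_starProd_homotopyEquiv_starLink :
    Nonempty ({x : StarProd n q W // x ≠ 0} ≃ₕ StarLink n q W) :=
  nonempty_punctured_homotopyEquiv_link gauge gauge_smul fun _ => gauge_eq_zero

/-- Push every star coordinate towards its stem by `ρ`, after scaling everything by `1 - ρ`. -/
def contract (ρ : ℝ≥0) (x : StarProd n q W) : StarProd n q W :=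
  (fun i => push ρ ((1 - ρ) • x.1 i), (1 - ρ) • x.2)

lemma contract_zero (x : StarProd n q W) : contract 0 x = x := by
  simp [contract, push_zero]

lemma contract_one (x : StarProd n q W) : contract 1 x = (fun _ => push 1 0, 0) := by
  simp [contract, indCone.zero_smul]

lemma contract_contractionTime_ne_zero (s : ℝ≥0) (x : StarLink n q W) :
    contract (contractionTime s x.1) x.1 ≠ 0 := by
  intro h
  set ρ := contractionTime s x.1 with hρ
  have hpush i := push_eq_zero (congrFun (congrArg Prod.fst h) i)
  have hleg i : (1 - ρ) * legHeight (x.1.1 i) = ρ := (legHeight_smul _ _).symm.trans (hpush i).2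
  have hne : 1 - ρ ≠ 0 := by
    intro h₀
    have hρ₀ := hleg 0
    rw [h₀, zero_mul] at hρ₀
    rw [← hρ₀, tsub_zero] at h₀
    exact one_ne_zero h₀
  have hheight i : legHeight (x.1.1 i) = (1 - ρ)⁻¹ * ρ := (eq_inv_mul_iff_mul_eq₀ hne).2 (hleg i)
  have hmass i : indCone.mass (x.1.1 i) = (1 - ρ)⁻¹ * ρ := by
    rw [mass_eq_add_legHeight, (mul_eq_zero.1 (hpush i).1).resolve_left hne, zero_add, hheight]
  have hw : x.1.2 = 0 := (smul_eq_zero.1 (congrArg Prod.snd h)).resolve_left hne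
  have hgauge : (n + 1) * ((1 - ρ)⁻¹ * ρ) = 1 := by
    simpa [gauge, hmass, hw] using x.2
  have hρ₀ : ρ = 0 := by
    rw [hρ, contractionTime, prod_eq_one fun i _ => by rw [hheight, hgauge], tsub_self, mul_zero]
  simp [hρ₀] at hgauge

/-- The flow `contract` on the link. It contracts `stemPart` in time `1`. -/
def linkFlow (s : ℝ≥0) (x : StarLink n q W) : StarLink n q W :=
  normalize (contract (contractionTime s x.1) x.1) (contract_contractionTime_ne_zero s x)

lemma linkFlow_zero (x : StarLink n q W) : linkFlow 0 x = x := by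
  simp only [linkFlow, contractionTime, zero_mul, contract_zero, normalize_coe]

lemma linkFlow_mem_stemPart (s : ℝ≥0) {x : StarLink n q W} (hx : x ∈ stemPart n q W) :
    linkFlow s x ∈ stemPart n q W := by
  obtain ⟨i, hi⟩ := hx
  refine ⟨i, ?_⟩
  change legHeight ((_ : ℝ≥0) • push _ ((_ : ℝ≥0) • x.1.1 i)) = 0
  rw [legHeight_smul, legHeight_push, legHeight_smul, hi, mul_zero, zero_tsub, mul_zero]

lemma linkFlow_one {x y : StarLink n q W} (hx : x ∈ stemPart n q W) (hy : y ∈ stemPart n q W) :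
    linkFlow 1 x = linkFlow 1 y := by
  simp only [linkFlow, contractionTime_of_mem, hx, hy, contract_one]

variable (n q W) in
/-- The homotopy on the link given by `linkFlow`. -/
def linkHomotopy : C(I × StarLink n q W, StarLink n q W) where
  toFun p := linkFlow (unitInterval.toNNReal p.1) p.2
  continuous_toFun := by
    have htime : Continuous fun p : I × StarLink n q W =>
        contractionTime (unitInterval.toNNReal p.1) p.2.1 := by
      unfold contractionTime
      fun_prop
    refine continuous_normalize (.prodMk (continuous_pi fun i => continuous_push htime ?_) ?_) _
    · fun_prop
    · fun_prop

lemma linkHomotopy_apply (p : I × StarLink n q W) :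
    linkHomotopy n q W p = linkFlow (unitInterval.toNNReal p.1) p.2 :=
  rfl

variable (n q W) in
lemma stemPart_nonempty : (stemPart n q W).Nonempty := by
  have hne : ((fun _ => push 1 0, 0) : StarProd n q W) ≠ 0 := fun h => by
    have := (push_eq_zero (congrFun (congrArg Prod.fst h) 0)).2
    exact zero_ne_one (legHeight_zero.symm.trans this)
  refine ⟨normalize _ hne, 0, ?_⟩
  change legHeight ((_ : ℝ≥0) • push 1 (0 : StarCone q)) = 0
  rw [legHeight_smul, legHeight_push, legHeight_zero, zero_tsub, mul_zero]

variable [FiniteDimensional ℝ W]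

instance : CompactSpace (StarLink n q W) := by
  have : ProperSpace W := FiniteDimensional.proper ℝ W
  have : ProperSpace (StarCone q) := .of_isClosed (indCone.isClosed _)
  refine isCompact_iff_compactSpace.1 (Metric.isCompact_of_isClosed_isBounded
    (isClosed_eq (by fun_prop) continuous_const) ?_)
  refine (Metric.isBounded_closedBall (x := (0 : StarProd n q W)) (r := 1)).subset
    fun x hx => ?_
  have hstar i v : (x.1 i).1 v ≤ 1 := calc
    (x.1 i).1 v ≤ indCone.mass (x.1 i) :=
      single_le_sum_of_canonicallyOrdered (f := (x.1 i).1) (mem_univ v)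
    _ ≤ ∑ i, indCone.mass (x.1 i) :=
      single_le_sum_of_canonicallyOrdered (f := fun i => indCone.mass (x.1 i)) (mem_univ i)
    _ ≤ 1 := le_self_add.trans_eq hx
  have hnorm : ‖x.2‖₊ ≤ 1 := le_add_self.trans_eq hx
  refine max_le ((dist_pi_le_iff zero_le_one).2 fun i =>
    (dist_pi_le_iff zero_le_one).2 fun v => ?_) ((dist_zero_right x.2).trans_le hnorm)
  exact (NNReal.nndist_zero_eq_val' _).trans_le (hstar i v)

end StarLink

section Cells

variable {n q : ℕ} {W : Type*} [NormedAddCommGroup W]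

open StarCone

lemma StarCone.continuous_leg (b : Fin q) : Continuous (leg b) := by
  refine .subtype_mk (continuous_pi fun v => ?_) _
  split_ifs
  · exact continuous_id
  · exact continuous_const

/-- The heights of the legs in logarithmic coordinates relative to the first leg. -/
def cellHeight (t : Fin n → ℝ) : Fin (n + 1) → ℝ≥0 :=
  Fin.cons 1 fun i => (Real.exp (t i)).toNNReal

lemma cellHeight_ne_zero (t : Fin n → ℝ) (i : Fin (n + 1)) : cellHeight t i ≠ 0 := by
  cases i using Fin.cases <;> simp [cellHeight, Real.exp_pos]

lemma cellHeight_log {c : Fin (n + 1) → ℝ≥0} (hc : ∀ i, c i ≠ 0) (i : Fin (n + 1)) :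
    cellHeight (fun i : Fin n => Real.log (c i.succ / c 0)) i = (c 0)⁻¹ * c i := by
  cases i using Fin.cases with
  | zero => exact (inv_mul_cancel₀ (hc 0)).symm
  | succ i =>
    have hpos : 0 < c i.succ / c 0 := div_pos (hc i.succ).bot_lt (hc 0).bot_lt
    rw [cellHeight, Fin.cons_succ, ← NNReal.coe_div, Real.exp_log (mod_cast hpos),
      Real.toNNReal_coe, div_eq_inv_mul]

/-- The point with the prescribed legs, relative heights on them, and coordinate in `W`. -/
def cellPoint (p : (Fin (n + 1) → Fin q) × (Fin n → ℝ) × W) : StarProd n q W :=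
  (fun i => leg (p.1 i) (cellHeight p.2.1 i), p.2.2)

lemma cellPoint_ne_zero (p : (Fin (n + 1) → Fin q) × (Fin n → ℝ) × W) : cellPoint p ≠ 0 := by
  intro h
  refine cellHeight_ne_zero p.2.1 0 ?_
  rw [← legHeight_leg (p.1 0) (cellHeight _ _), ← legHeight_zero]
  exact congrArg legHeight (congrFun (congrArg Prod.fst h) 0)

lemma continuous_cellPoint :
    Continuous (cellPoint : (Fin (n + 1) → Fin q) × (Fin n → ℝ) × W → StarProd n q W) := by
  refine continuous_prod_of_discrete_left.2 fun b =>
    .prodMk (continuous_pi fun i => (continuous_leg (b i)).comp ?_) continuous_snd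
  cases i using Fin.cases <;> simp only [cellHeight, Fin.cons_zero, Fin.cons_succ] <;> fun_prop

lemma legHeight_ne_zero (x : ↥(stemPart n q W)ᶜ) (i : Fin (n + 1)) :
    legHeight (x.1.1.1 i) ≠ 0 :=
  fun h => x.2 ⟨i, h⟩

variable [NormedSpace ℝ W]

/-- The coordinates inverse to `cellPoint` on the complement of the stems. -/
def cellCoord (x : ↥(stemPart n q W)ᶜ) : (Fin (n + 1) → Fin q) × (Fin n → ℝ) × W :=
  (fun i => label ⟨x.1.1.1 i, legHeight_ne_zero x i⟩,
    fun i => Real.log (legHeight (x.1.1.1 i.succ) / legHeight (x.1.1.1 0)),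
    (legHeight (x.1.1.1 0))⁻¹ • x.1.1.2)

lemma cellPoint_cellCoord (x : ↥(stemPart n q W)ᶜ) :
    cellPoint (cellCoord x) = (legHeight (x.1.1.1 0))⁻¹ • x.1.1 := by
  refine Prod.ext (funext fun i => ?_) (by rfl)
  have hleg := leg_label ⟨x.1.1.1 i, legHeight_ne_zero x i⟩
  refine (congrArg (leg _) (cellHeight_log (legHeight_ne_zero x) i)).trans ?_
  rw [← smul_leg]
  exact congrArg _ hleg

lemma legHeight_normalize_cellPoint (p : (Fin (n + 1) → Fin q) × (Fin n → ℝ) × W)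
    (i : Fin (n + 1)) : legHeight ((normalize (cellPoint p) (cellPoint_ne_zero p)).1.1 i) =
      (gauge (cellPoint p))⁻¹ * cellHeight p.2.1 i := by
  change legHeight ((_ : ℝ≥0) • leg (p.1 i) (cellHeight p.2.1 i)) = _
  rw [legHeight_smul, legHeight_leg]

lemma normalize_cellPoint_notMem_stemPart (p : (Fin (n + 1) → Fin q) × (Fin n → ℝ) × W) :
    normalize (cellPoint p) (cellPoint_ne_zero p) ∉ stemPart n q W := by
  rintro ⟨i, hi⟩
  rw [legHeight_normalize_cellPoint] at hi
  exact mul_ne_zero (inv_ne_zero (mt gauge_eq_zero.1 (cellPoint_ne_zero p)))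
    (cellHeight_ne_zero _ i) hi

lemma cellCoord_normalize (p : (Fin (n + 1) → Fin q) × (Fin n → ℝ) × W) :
    cellCoord ⟨_, normalize_cellPoint_notMem_stemPart p⟩ = p := by
  have hgauge := mt gauge_eq_zero.1 (cellPoint_ne_zero p)
  refine Prod.ext (funext fun i => label_eq_iff.2 ?_) (Prod.ext (funext fun i => ?_) ?_)
  · change (gauge (cellPoint p))⁻¹ * (leg (p.1 i) (cellHeight p.2.1 i)).1 (p.1 i).succ ≠ 0
    refine mul_ne_zero (inv_ne_zero hgauge) ?_
    simpa [leg] using cellHeight_ne_zero p.2.1 i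
  · simp only [cellCoord, legHeight_normalize_cellPoint, ← NNReal.coe_div,
      mul_div_mul_left _ _ (inv_ne_zero hgauge)]
    simp [cellHeight, Real.exp_nonneg]
  · simp only [cellCoord, legHeight_normalize_cellPoint]
    change ((gauge (cellPoint p))⁻¹ * 1)⁻¹ • (gauge (cellPoint p))⁻¹ • p.2.2 = p.2.2
    rw [mul_one, inv_inv, smul_inv_smul₀ hgauge]

lemma continuous_cellCoord : Continuous (cellCoord (n := n) (q := q) (W := W)) := by
  have hheight (i) : Continuous fun x : ↥(stemPart n q W)ᶜ => legHeight (x.1.1.1 i) := by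
    fun_prop
  refine .prodMk (continuous_pi fun i => continuous_label.comp ?_)
    (.prodMk (continuous_pi fun i => .log ?_ ?_) (.smul (.inv₀ ?_ ?_) ?_))
  · fun_prop
  · exact (NNReal.continuous_coe.comp (hheight _)).div (NNReal.continuous_coe.comp (hheight _))
      fun x => NNReal.coe_ne_zero.2 (legHeight_ne_zero x 0)
  · exact fun x => div_ne_zero (NNReal.coe_ne_zero.2 (legHeight_ne_zero x _))
      (NNReal.coe_ne_zero.2 (legHeight_ne_zero x 0))
  · fun_prop
  · exact fun x => NNReal.coe_ne_zero.2 (legHeight_ne_zero x 0)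
  · fun_prop

/-- The complement of `stemPart` is a disjoint union of open cells. -/
def complStemPartHomeomorph :
    ↥(stemPart n q W)ᶜ ≃ₜ (Fin (n + 1) → Fin q) × (Fin n → ℝ) × W where
  toFun := cellCoord
  invFun p := ⟨_, normalize_cellPoint_notMem_stemPart p⟩
  left_inv x := Subtype.ext (by
    simp only [cellPoint_cellCoord]
    rw [normalize_smul _ x.1.coe_ne_zero, normalize_coe])
  right_inv := cellCoord_normalize
  continuous_toFun := continuous_cellCoord
  continuous_invFun := .subtype_mk (continuous_normalize continuous_cellPoint _) _

variable [FiniteDimensional ℝ W]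

lemma nonempty_starLink_homotopyEquiv_onePoint :
    Nonempty (StarLink n q W ≃ₕ OnePoint ↥(stemPart n q W)ᶜ) := by
  obtain ⟨x₀, hx₀⟩ := stemPart_nonempty n q W
  exact nonempty_homotopyEquiv_onePoint_compl (H := linkHomotopy n q W) isClosed_stemPart
    (linkFlow_mem_stemPart 1 hx₀)
    (fun x => by rw [linkHomotopy_apply, unitInterval.toNNReal_zero, linkFlow_zero])
    (fun t x hx => linkFlow_mem_stemPart _ hx)
    (fun x hx => by rw [linkHomotopy_apply, unitInterval.toNNReal_one, linkFlow_one hx hx₀])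

lemma nonempty_starLink_homotopyEquiv_wedgeOfSpheres {d : ℕ} (hq : 0 < q)
    (hd : n + Module.finrank ℝ W = d) :
    Nonempty (StarLink n q W ≃ₕ WedgeOfSpheres (q ^ (n + 1)) d) := by
  obtain ⟨e⟩ := nonempty_starLink_homotopyEquiv_onePoint (n := n) (q := q) (W := W)
  let eV : ((Fin n → ℝ) × W) ≃L[ℝ] EuclideanSpace ℝ (Fin d) :=
    .ofFinrankEq (by simp [hd])
  let eF := finFunctionFinEquiv (m := q) (n := n + 1)
  obtain ⟨e'⟩ := nonempty_wedgeOfSpheres_homeomorph_onePoint (pow_pos hq (n + 1)) d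
  let h := complStemPartHomeomorph.trans (eF.toHomeomorphOfDiscrete.prodCongr eV.toHomeomorph)
  exact ⟨e.trans (h.onePointCongr.trans e'.symm).toHomotopyEquiv⟩

end Cells

section Main

lemma nonempty_homPlus_homotopyEquiv_wedgeOfSpheres {G : Graph} {W : Type*}
    [NormedAddCommGroup W] [NormedSpace ℝ W] [FiniteDimensional ℝ W] {n q d : ℕ} (hq : 0 < q)
    (h : PuncturedEquiv (indCone G.adj) (indCone (completeGraph (q + 1)).adj × W))
    (hd : n + (n + 1) * Module.finrank ℝ W = d) :
    Nonempty (HomPlus G (completeGraph (n + 1)) ≃ₕ WedgeOfSpheres (q ^ (n + 1)) d) := by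
  let distrib : (Fin (n + 1) → StarCone q × W) ≃ₜ StarProd n q (Fin (n + 1) → W) :=
    { toEquiv := .arrowProdEquivProdArrow _ _ _
      continuous_toFun := by dsimp [Equiv.arrowProdEquivProdArrow]; fun_prop
      continuous_invFun := by dsimp [Equiv.arrowProdEquivProdArrow]; fun_prop }
  obtain ⟨e⟩ := nonempty_homPlus_homotopyEquiv G (n + 1)
  obtain ⟨e'⟩ := ((PuncturedEquiv.pi fun _ : Fin (n + 1) => h).trans
    (.of_homeomorph distrib rfl)).homotopyEquiv
  obtain ⟨toLink⟩ := nonempty_starProd_homotopyEquiv_starLink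
    (n := n) (q := q) (W := Fin (n + 1) → W)
  obtain ⟨toWedge⟩ := nonempty_starLink_homotopyEquiv_wedgeOfSpheres
    (n := n) (q := q) (W := Fin (n + 1) → W) hq
    (by rw [Module.finrank_pi_fintype, Fin.sum_const, smul_eq_mul, hd])
  exact ⟨e.trans (e'.trans (toLink.trans toWedge))⟩

/-- The homotopy type of `Hom₊(C_m, K_n)`: a wedge of `2^n` copies of `S^{nk-1}` if `m = 3k`,
and `S^{nk-1}` if `m = 3k ± 1`. -/
theorem homPlus_cycle_complete_homotopy_type (m n k : ℕ) (hm : 2 ≤ m) (hn : 1 ≤ n) :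
    (m = 3 * k → Nonempty (ContinuousMap.HomotopyEquiv
        (HomPlus (cycleGraph m) (completeGraph n)) (WedgeOfSpheres (2 ^ n) (n * k - 1)))) ∧
    ((m = 3 * k + 1 ∨ m = 3 * k - 1) → Nonempty (ContinuousMap.HomotopyEquiv
        (HomPlus (cycleGraph m) (completeGraph n)) (nSphere (n * k - 1)))) := by
  obtain ⟨a, rfl⟩ : ∃ a, n = a + 1 := ⟨n - 1, by omega⟩
  rcases k with _ | j
  · omega
  have hd : (a + 1) * (j + 1) - 1 + 1 = (a + 1) * (j + 1) :=
    Nat.sub_add_cancel (Nat.mul_pos a.succ_pos j.succ_pos)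
  refine ⟨fun h => ?_, ?_⟩
  · obtain rfl : m = 3 * j + 3 := by omega
    refine nonempty_homPlus_homotopyEquiv_wedgeOfSpheres two_pos
      (puncturedEquiv_cycleGraph_three_mul_add_three j) ?_
    rw [Module.finrank_fin_fun]
    lia
  · rintro (h | h)
    · obtain rfl : m = 3 * (j + 1) + 1 := by omega
      refine nonempty_homPlus_homotopyEquiv_nSphere
        (puncturedEquiv_cycleGraph_three_mul_add_one (j + 1)) ?_
      rw [Module.finrank_fin_fun, hd]
    · obtain rfl : m = 3 * j + 2 := by omega
      refine nonempty_homPlus_homotopyEquiv_nSphere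
        (puncturedEquiv_cycleGraph_three_mul_add_two j) ?_
      rw [Module.finrank_prod, Module.finrank_self, Module.finrank_fin_fun, hd, add_comm 1]

end Main

end Lovasz
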